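/- arXiv:2008.04458 — 4 statements merged into one kernel-verified Lean document; each statement's English description precedes it below -/
import Mathlib

section
/- For every real x ≥ 0 and every complex t with Re t > 0 and 2t ∉ ℤ: ∫₀^∞ e^{−lt}/(1+e^{(x−l)/2}) dl = 2π·e^{−tx}/sin(2πt) − lim_{N→∞} Σ_{k=1}^N (−1)^k·e^{−xk/2}/(t−k/2), where the integral converges absolutely and the limit of partial sums on the right exists. -/
/-!
The half-line is cut at `l = x`, where the two geometric expansions of the kernel meet. With
`u = e^{-|l-x|/2}`, the factor `1/(1+e^{(x-l)/2})` equals `1/(1+u) = ∑_{k ≥ 0} (-u)^k` for `l > x`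
and `u/(1+u) = -∑_{k ≥ 1} (-u)^k` for `l < x`. The partial sums are bounded by `2`, so dominated
convergence allows integration term by term (`tendsto_sum_integral_geometric`), giving

* `∫_x^∞ = e^{-tx} ∑_{k ≥ 0} (-1)^k / (t + k/2)` (`tendsto_tail`),
* `∫_0^x = ∑_{k ≥ 1} (-1)^k (e^{-tx} - e^{-xk/2}) / (t - k/2)` (`tendsto_head`).

Adding the two, the multiples of `e^{-tx}` form the symmetric partial sums of the partial fraction
expansion `π / sin (π s) = 1/s + ∑_{k ≥ 1} (-1)^k (1/(s-k) + 1/(s+k))` at `s = 2t`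
(`hasSum_cosecant`), and what remains is minus the series of the theorem. The convergence of that
series follows as well, as it is a combination of three convergent sequences. The cosecant
expansion comes from Mathlib's cotangent expansion through `1 / sin z = cot (z/2) - cot z`.
-/

open scoped Real Topology
open MeasureTheory Filter

noncomputable section

lemma abs_sum_geometric_neg_le {u : ℝ} (h0 : 0 ≤ u) (h1 : u < 1) (N : ℕ) :
    |∑ k ∈ Finset.range N, (-u) ^ k| ≤ 2 := by
  rw [geom_sum_eq (by linarith), abs_div, div_le_iff₀ (by rw [abs_pos]; linarith)]
  have h2 : |(-u) ^ N| ≤ 1 := by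
    rw [abs_pow, abs_neg, abs_of_nonneg h0]
    exact pow_le_one₀ h0 h1.le
  have h3 : |(-u) ^ N - 1| ≤ |(-u) ^ N| + |(1 : ℝ)| := abs_sub _ _
  have h4 : |-u - 1| = u + 1 := by rw [abs_of_neg (by linarith)]; ring
  rw [h4]
  rw [abs_one] at h3
  linarith

/-- Term-by-term integration of the alternating geometric series of `1 / (1 + u)`, by dominated
convergence with the dominating function `2 ‖g‖`. -/
lemma tendsto_sum_integral_geometric {A : Set ℝ} (hA : MeasurableSet A) {g : ℝ → ℂ} {u : ℝ → ℝ}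
    (hg : IntegrableOn g A) (hu : Continuous u) (hu0 : ∀ l ∈ A, 0 ≤ u l) (hu1 : ∀ l ∈ A, u l < 1) :
    Tendsto (fun N : ℕ => ∑ k ∈ Finset.range N, (-1 : ℂ) ^ k * ∫ l in A, g l * (u l : ℂ) ^ k)
      atTop (𝓝 (∫ l in A, g l / ((1 + u l : ℝ) : ℂ))) := by
  have hint : ∀ k : ℕ, IntegrableOn (fun l => g l * (u l : ℂ) ^ k) A := by
    intro k
    refine Integrable.mono hg (hg.aestronglyMeasurable.mul
      (by fun_prop : Continuous fun l => (u l : ℂ) ^ k).aestronglyMeasurable) ?_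
    filter_upwards [ae_restrict_mem hA] with l hl
    rw [norm_mul, norm_pow, Complex.norm_real, Real.norm_of_nonneg (hu0 l hl)]
    exact mul_le_of_le_one_right (norm_nonneg _) (pow_le_one₀ (hu0 l hl) (hu1 l hl).le)
  have hsum : ∀ N : ℕ, ∑ k ∈ Finset.range N, (-1 : ℂ) ^ k * ∫ l in A, g l * (u l : ℂ) ^ k =
      ∫ l in A, g l * ((∑ k ∈ Finset.range N, (-u l) ^ k : ℝ) : ℂ) := by
    intro N
    simp_rw [← integral_const_mul]
    rw [← integral_finsetSum _ fun k _ => (hint k).const_mul _]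
    refine integral_congr_ae (Eventually.of_forall fun l => ?_)
    simp only
    push_cast
    rw [Finset.mul_sum]
    refine Finset.sum_congr rfl fun k _ => ?_
    rw [neg_pow (u l : ℂ)]
    ring
  simp_rw [hsum]
  refine tendsto_integral_of_dominated_convergence (fun l => ‖g l‖ * 2) (fun N => ?_)
    (hg.norm.mul_const 2) (fun N => ?_) ?_
  · exact hg.aestronglyMeasurable.mul (by fun_prop : Continuous fun l =>
      ((∑ k ∈ Finset.range N, (-u l) ^ k : ℝ) : ℂ)).aestronglyMeasurable
  · filter_upwards [ae_restrict_mem hA] with l hl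
    rw [norm_mul, Complex.norm_real, Real.norm_eq_abs]
    gcongr
    exact abs_sum_geometric_neg_le (hu0 l hl) (hu1 l hl) N
  · filter_upwards [ae_restrict_mem hA] with l hl
    have h := (hasSum_geometric_of_abs_lt_one (r := -u l)
      (by rw [abs_neg, abs_of_nonneg (hu0 l hl)]; exact hu1 l hl)).tendsto_sum_nat
    rw [sub_neg_eq_add] at h
    have h' := ((Complex.continuous_ofReal.tendsto _).comp h).const_mul (g l)
    rw [Complex.ofReal_inv, ← div_eq_mul_inv] at h'
    exact h'

/-- On `l > x` the kernel is `∑_{k ≥ 0} (-1)^k e^{(x-l)k/2}`. -/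
lemma tendsto_tail (x : ℝ) (t : ℂ) (ht : 0 < t.re) :
    Tendsto (fun N : ℕ => ∑ k ∈ Finset.range N,
        (-1 : ℂ) ^ k * (Complex.exp (-t * x) / (t + k / 2))) atTop
      (𝓝 (∫ l in Set.Ioi x,
        Complex.exp (-(l : ℂ) * t) / ((1 + Real.exp ((x - l) / 2) : ℝ) : ℂ))) := by
  have hg : IntegrableOn (fun l : ℝ => Complex.exp (-(l : ℂ) * t)) (Set.Ioi x) := by
    refine (integrableOn_exp_mul_complex_Ioi (a := -t) (by simpa using ht) x).congr_fun
      (fun l _ => ?_) measurableSet_Ioi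
    simp only
    congr 1
    ring
  refine (tendsto_sum_integral_geometric measurableSet_Ioi hg
    (u := fun l => Real.exp ((x - l) / 2)) (by fun_prop) (fun l _ => (Real.exp_pos _).le)
    (fun l hl => Real.exp_lt_one_iff.2 (by linarith [Set.mem_Ioi.1 hl]))).congr fun N => ?_
  refine Finset.sum_congr rfl fun k _ => ?_
  congr 1
  have hre : (-(t + k / 2)).re < 0 := by
    have : (0 : ℝ) ≤ k := k.cast_nonneg
    simp
    linarith
  have hne : t + k / 2 ≠ 0 := fun h => by simp [h] at hre
  calc ∫ l in Set.Ioi x, Complex.exp (-(l : ℂ) * t) * (Real.exp ((x - l) / 2) : ℂ) ^ k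
      = ∫ l in Set.Ioi x, Complex.exp (x * k / 2) * Complex.exp (-(t + k / 2) * l) := by
        refine integral_congr_ae (Eventually.of_forall fun l => ?_)
        simp only
        push_cast
        rw [← Complex.exp_nat_mul, ← Complex.exp_add, ← Complex.exp_add]
        congr 1
        ring
    _ = Complex.exp (-t * x) / (t + k / 2) := by
        rw [integral_const_mul, integral_exp_mul_complex_Ioi hre, neg_div_neg_eq, ← mul_div_assoc,
          ← Complex.exp_add]
        congr 2
        ring

/-- On `l < x` the kernel is `-∑_{k ≥ 1} (-1)^k e^{(l-x)k/2}`. -/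
lemma tendsto_head (x : ℝ) (hx : 0 ≤ x) (t : ℂ) (ht2 : ∀ k : ℤ, 2 * t ≠ (k : ℂ)) :
    Tendsto (fun N : ℕ => ∑ k ∈ Finset.range N, (-1 : ℂ) ^ (k + 1) *
        ((Complex.exp (-t * x) - Complex.exp (-(x : ℂ) * (k + 1 : ℕ) / 2)) /
          (t - (k + 1 : ℕ) / 2))) atTop
      (𝓝 (∫ l in Set.Ioc 0 x,
        Complex.exp (-(l : ℂ) * t) / ((1 + Real.exp ((x - l) / 2) : ℝ) : ℂ))) := by
  rw [integral_Ioc_eq_integral_Ioo]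
  have hg : IntegrableOn (fun l : ℝ => Complex.exp (-(l : ℂ) * t) * Real.exp ((l - x) / 2))
      (Set.Ioo 0 x) :=
    (by fun_prop : Continuous fun l : ℝ => Complex.exp (-(l : ℂ) * t) *
      Real.exp ((l - x) / 2)).integrableOn_Icc.mono_set Set.Ioo_subset_Icc_self
  have key := tendsto_sum_integral_geometric measurableSet_Ioo hg
    (u := fun l => Real.exp ((l - x) / 2)) (by fun_prop) (fun l _ => (Real.exp_pos _).le)
    (fun l hl => Real.exp_lt_one_iff.2 (by linarith [hl.2]))
  have hlim : ∫ l in Set.Ioo 0 x, Complex.exp (-(l : ℂ) * t) * Real.exp ((l - x) / 2) /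
        ((1 + Real.exp ((l - x) / 2) : ℝ) : ℂ) = ∫ l in Set.Ioo 0 x,
        Complex.exp (-(l : ℂ) * t) / ((1 + Real.exp ((x - l) / 2) : ℝ) : ℂ) := by
    refine integral_congr_ae (Eventually.of_forall fun l => ?_)
    simp only
    have h1 : Real.exp ((l - x) / 2) / (1 + Real.exp ((l - x) / 2)) =
        1 / (1 + Real.exp ((x - l) / 2)) := by
      have h2 : Real.exp ((l - x) / 2) * Real.exp ((x - l) / 2) = 1 := by
        rw [← Real.exp_add, ← Real.exp_zero]
        congr 1
        ring
      rw [div_eq_div_iff (by positivity) (by positivity)]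
      linear_combination h2
    rw [mul_div_assoc, ← Complex.ofReal_div, h1, Complex.ofReal_div, Complex.ofReal_one,
      mul_one_div]
  rw [hlim] at key
  refine key.congr fun N => Finset.sum_congr rfl fun k _ => ?_
  have hne : t - (k + 1 : ℕ) / 2 ≠ 0 := by
    intro h
    refine ht2 (k + 1 : ℕ) ?_
    rw [Int.cast_natCast]
    linear_combination 2 * h
  have hne' : -(t - (k + 1 : ℕ) / 2) ≠ 0 := neg_ne_zero.2 hne
  have hval : ∫ l in Set.Ioo 0 x, Complex.exp (-(l : ℂ) * t) * (Real.exp ((l - x) / 2) : ℂ) *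
        (Real.exp ((l - x) / 2) : ℂ) ^ k =
      Complex.exp (-(x : ℂ) * (k + 1 : ℕ) / 2) *
        ((Complex.exp (-(t - (k + 1 : ℕ) / 2) * x) - 1) / -(t - (k + 1 : ℕ) / 2)) := by
    calc _ = ∫ l in Set.Ioo 0 x, Complex.exp (-(x : ℂ) * (k + 1 : ℕ) / 2) *
          Complex.exp (-(t - (k + 1 : ℕ) / 2) * l) := by
          refine integral_congr_ae (Eventually.of_forall fun l => ?_)
          simp only
          push_cast
          rw [← Complex.exp_nat_mul, ← Complex.exp_add, ← Complex.exp_add, ← Complex.exp_add]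
          congr 1
          ring
      _ = _ := by
          rw [integral_const_mul, ← integral_Ioc_eq_integral_Ioo,
            ← intervalIntegral.integral_of_le hx, integral_exp_mul_complex hne']
          simp
  rw [hval]
  have hexp : Complex.exp (-t * x) = Complex.exp (-(x : ℂ) * (k + 1 : ℕ) / 2) *
      Complex.exp (-(t - (k + 1 : ℕ) / 2) * x) := by
    rw [← Complex.exp_add]
    congr 1
    ring
  rw [hexp, div_neg]
  ring

/-- The partial fraction expansion `π / sin (π s) = 1/s + ∑_{n ≥ 1} (-1)^n (1/(s-n) + 1/(s+n))`.
The terms of even `n` are half those of the cotangent expansion at `s/2`. -/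
lemma hasSum_cosecant {s : ℂ} (hs : s ∈ Complex.integerComplement) :
    HasSum (fun n : ℕ => (-1 : ℂ) ^ (n + 1) * cotTerm s n)
      (π / Complex.sin (π * s) - 1 / s) := by
  have hs2 : s / 2 ∈ Complex.integerComplement := by
    rw [Complex.mem_integerComplement_iff] at hs ⊢
    rintro ⟨n, hn⟩
    exact hs ⟨2 * n, by push_cast; rw [hn]; ring⟩
  have hC : HasSum (cotTerm s) (π * Complex.cot (π * s) - 1 / s) := by
    rw [cot_series_rep' hs]
    exact (summable_cotTerm hs).hasSum
  have hodd : HasSum (fun n : ℕ => cotTerm s (2 * n + 1))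
      (1 / 2 * (π * Complex.cot (π * (s / 2)) - 1 / (s / 2))) := by
    have hterm : ∀ n : ℕ, cotTerm s (2 * n + 1) = 1 / 2 * cotTerm (s / 2) n := by
      intro n
      have e1 : s / 2 - (n + 1) = (s - ((2 * n + 1 : ℕ) + 1)) / 2 := by push_cast; ring
      have e2 : s / 2 + (n + 1) = (s + ((2 * n + 1 : ℕ) + 1)) / 2 := by push_cast; ring
      rw [cotTerm, cotTerm, e1, e2, one_div_div, one_div_div]
      ring
    rw [cot_series_rep' hs2, funext hterm]
    exact (summable_cotTerm hs2).hasSum.mul_left (1 / 2)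
  have heven : HasSum (fun n : ℕ => cotTerm s (2 * n)) (∑' n : ℕ, cotTerm s (2 * n)) :=
    (hC.summable.comp_injective (mul_right_injective₀ (two_ne_zero' ℕ))).hasSum
  have hE := (heven.even_add_odd hodd).unique hC
  have halt := HasSum.even_add_odd (f := fun n : ℕ => (-1 : ℂ) ^ (n + 1) * cotTerm s n)
    (m := -∑' n : ℕ, cotTerm s (2 * n))
    (m' := 1 / 2 * (π * Complex.cot (π * (s / 2)) - 1 / (s / 2)))
    (by simpa [pow_succ, pow_mul] using heven.neg) (by simpa [pow_succ, pow_mul] using hodd)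
  convert halt using 1
  have hsin := sin_pi_mul_ne_zero hs2
  have hcot : 1 / Complex.sin (π * s) =
      Complex.cot (π * (s / 2)) - Complex.cot (π * s) := by
    have hs' := sin_pi_mul_ne_zero hs
    have e : (π : ℂ) * s = 2 * (π * (s / 2)) := by ring
    rw [e] at hs' ⊢
    rw [Complex.sin_two_mul] at hs'
    have hcos : Complex.cos (π * (s / 2)) ≠ 0 := right_ne_zero_of_mul hs'
    rw [Complex.cot, Complex.cot, Complex.sin_two_mul, Complex.cos_two_mul]
    field_simp
    ring
  have hs0 := Complex.integerComplement.ne_zero hs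
  rw [div_eq_mul_one_div, hcot]
  have e2 : 1 / (s / 2) = 2 * (1 / s) := by field_simp
  rw [e2] at hE ⊢
  linear_combination hE

/-- The integrand is dominated by `e^{-l Re t}`. -/
lemma integrableOn_kernel (x : ℝ) (t : ℂ) (ht : 0 < t.re) :
    IntegrableOn
      (fun l : ℝ => Complex.exp (-(l : ℂ) * t) / ((1 + Real.exp ((x - l) / 2) : ℝ) : ℂ))
      (Set.Ioi 0) := by
  have hne : ∀ l : ℝ, ((1 + Real.exp ((x - l) / 2) : ℝ) : ℂ) ≠ 0 := fun l =>
    Complex.ofReal_ne_zero.2 (by positivity)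
  refine Integrable.mono (integrableOn_exp_mul_complex_Ioi (a := -t) (by simpa using ht) 0)
    (Continuous.div (by fun_prop) (by fun_prop) hne).aestronglyMeasurable
    (Eventually.of_forall fun l => ?_)
  rw [norm_div, Complex.norm_real, Real.norm_of_nonneg (by positivity),
    show -(l : ℂ) * t = -t * l by ring]
  exact div_le_self (norm_nonneg _) (by linarith [Real.exp_pos ((x - l) / 2)])

/-- For `x ≥ 0`, `Re t > 0` and `2t ∉ ℤ`, the integral
`∫₀^∞ e^{-lt}/(1+e^{(x-l)/2}) dl` converges absolutely and equals
`2π e^{-tx}/sin(2πt) - Σ_{k≥1} (-1)^k e^{-xk/2}/(t - k/2)`, the series converging. -/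
theorem laplace_kernel_expansion_minus (x : ℝ) (hx : 0 ≤ x) (t : ℂ) (ht : 0 < t.re)
    (ht2 : ∀ k : ℤ, 2 * t ≠ (k : ℂ)) :
    IntegrableOn
      (fun l : ℝ => Complex.exp (-(l : ℂ) * t) / ((1 + Real.exp ((x - l) / 2) : ℝ) : ℂ))
      (Set.Ioi 0) ∧
    ∃ S : ℂ,
      Tendsto (fun N : ℕ => ∑ k ∈ Finset.Icc 1 N,
          (-1 : ℂ) ^ k * Complex.exp (-(x : ℂ) * k / 2) / (t - k / 2)) atTop (𝓝 S) ∧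
      ∫ l in Set.Ioi (0 : ℝ),
          Complex.exp (-(l : ℂ) * t) / ((1 + Real.exp ((x - l) / 2) : ℝ) : ℂ) =
        2 * (π : ℂ) * Complex.exp (-t * x) / Complex.sin (2 * (π : ℂ) * t) - S := by
  have hint := integrableOn_kernel x t ht
  refine ⟨hint, ?_⟩
  have hs : 2 * t ∈ Complex.integerComplement := by
    rintro ⟨k, hk⟩
    exact ht2 k hk.symm
  have ht0 : t ≠ 0 := fun h => by simp [h] at ht
  have hP := ((hasSum_cosecant hs).tendsto_sum_nat.const_add (1 / (2 * t))).const_mul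
    (2 * Complex.exp (-t * x))
  -- the tail is taken with one more term, so that both expansions reach the index `k = N`
  have hK := (tendsto_tail x t ht).comp (tendsto_add_atTop_nat 1)
  have hJ := tendsto_head x hx t ht2
  refine ⟨_, (hP.sub (hJ.add hK)).congr fun N => ?_, ?_⟩
  · rw [Function.comp_apply, Finset.sum_range_succ', ← Finset.Ico_add_one_right_eq_Icc,
      Finset.sum_Ico_eq_sum_range, Nat.add_sub_cancel]
    rw [mul_add, Finset.mul_sum, sub_eq_iff_eq_add, ← add_assoc, ← add_assoc,
      ← Finset.sum_add_distrib, ← Finset.sum_add_distrib, add_comm]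
    congr 1
    · refine Finset.sum_congr rfl fun k _ => ?_
      have h1 : t - (k + 1 : ℕ) / 2 ≠ 0 := by
        intro h
        refine ht2 (k + 1 : ℕ) ?_
        rw [Int.cast_natCast]
        linear_combination 2 * h
      have h2 : t + (k + 1 : ℕ) / 2 ≠ 0 := by
        intro h
        refine ht2 (-(k + 1 : ℕ)) ?_
        push_cast at h ⊢
        linear_combination 2 * h
      have e1 : 1 / (2 * t - (k + 1)) = 1 / 2 * (1 / (t - (k + 1 : ℕ) / 2)) := by
        rw [one_div_mul_one_div]
        push_cast
        congr 1
        ring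
      have e2 : 1 / (2 * t + (k + 1)) = 1 / 2 * (1 / (t + (k + 1 : ℕ) / 2)) := by
        rw [one_div_mul_one_div]
        push_cast
        congr 1
        ring
      rw [cotTerm, e1, e2, add_comm 1 k]
      ring
    · field_simp
      simp
  · rw [← Set.Ioc_union_Ioi_eq_Ioi hx, setIntegral_union (Set.Ioc_disjoint_Ioi le_rfl)
      measurableSet_Ioi (hint.mono_set Set.Ioc_subset_Ioi_self)
      (hint.mono_set (Set.Ioi_subset_Ioi hx))]
    rw [show (π : ℂ) * (2 * t) = 2 * π * t by ring]
    ring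

end
end

section
/- For every complex t with 0 < Re t < 1/2 and every real x: ∫_{−∞}^{∞} e^{−lt}/(1+e^{(x−l)/2}) dl = 2π·e^{−tx}/sin(2πt). -/
/-!
The substitution `u = (l - x) / 2` turns the integral into
`2 e^{-tx} ∫ σ(u) e^{-2tu} du`, where `σ(u) = 1 / (1 + e^{-u})` is the logistic function. Since
`σ' = σ (1 - σ)` and `e^{-u} = (1 - σ) / σ`, the further substitution `y = σ(u)`, which maps `ℝ`
bijectively onto `(0, 1)`, identifies the remaining integral with the Beta integral
`B(1 - 2t, 2t) = ∫₀¹ y^{-2t} (1 - y)^{2t - 1} dy = Γ(1 - 2t) Γ(2t)`, and Euler's reflection formula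
evaluates it as `π / sin (2πt)`.
-/

open scoped Real Topology
open MeasureTheory Filter

noncomputable section

/-- The Beta integrand with parameters `1 - s` and `s`, pulled back along the logistic function
together with the Jacobian factor. -/
lemma sigmoid_pullback_beta (s : ℂ) (u : ℝ) :
    |u.sigmoid * (1 - u.sigmoid)| •
      (((u.sigmoid : ℝ) : ℂ) ^ ((1 - s) - 1) * (1 - ((u.sigmoid : ℝ) : ℂ)) ^ (s - 1)) =
    (u.sigmoid : ℂ) * Complex.exp (-(u : ℂ) * s) := by
  have hy := Real.sigmoid_pos u
  have hz : 0 < 1 - u.sigmoid := by linarith [Real.sigmoid_lt_one u]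
  have hlog : Real.log (1 - u.sigmoid) = Real.log u.sigmoid - u := by
    rw [← Real.sigmoid_neg, ← Real.sigmoid_mul_rexp_neg, Real.log_mul hy.ne' (Real.exp_pos _).ne',
      Real.log_exp, sub_eq_add_neg]
  have hyc : (u.sigmoid : ℂ) ≠ 0 := by exact_mod_cast hy.ne'
  have hzc : (1 - u.sigmoid : ℂ) ≠ 0 := by exact_mod_cast hz.ne'
  have hlogc : Complex.log (1 - u.sigmoid : ℂ) = Complex.log (u.sigmoid : ℂ) - u := by
    rw [← Complex.ofReal_log hy.le, ← Complex.ofReal_one, ← Complex.ofReal_sub,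
      ← Complex.ofReal_log hz.le, hlog, Complex.ofReal_sub]
  rw [abs_of_pos (mul_pos hy hz), Complex.real_smul, Complex.cpow_sub _ _ hzc, Complex.cpow_one,
    Complex.cpow_def_of_ne_zero hyc, Complex.cpow_def_of_ne_zero hzc, hlogc]
  have : Complex.exp (-(u : ℂ) * s) = Complex.exp (Complex.log (u.sigmoid : ℂ) * (1 - s - 1)) *
      Complex.exp ((Complex.log (u.sigmoid : ℂ) - u) * s) := by
    rw [← Complex.exp_add]; ring_nf
  rw [this]
  push_cast
  field_simp

lemma integral_sigmoid_mul_exp (s : ℂ) (h0 : 0 < s.re) (h1 : s.re < 1) :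
    ∫ u : ℝ, (u.sigmoid : ℂ) * Complex.exp (-(u : ℂ) * s) = π / Complex.sin (π * s) := by
  have key := integral_image_eq_integral_abs_deriv_smul (s := Set.univ) MeasurableSet.univ
    (fun u _ => (Real.hasDerivAt_sigmoid u).hasDerivWithinAt) Real.sigmoid_injective.injOn
    (fun y : ℝ => (y : ℂ) ^ ((1 - s) - 1) * (1 - (y : ℂ)) ^ (s - 1))
  simp only [sigmoid_pullback_beta, Set.image_univ, Real.range_sigmoid,
    Measure.restrict_univ] at key
  have hB := Complex.Gamma_mul_Gamma_eq_betaIntegral (s := 1 - s) (t := s) (by simpa using h1) h0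
  rw [← key, ← integral_Ioc_eq_integral_Ioo, ← intervalIntegral.integral_of_le zero_le_one,
    ← Complex.Gamma_mul_Gamma_one_sub, mul_comm (Complex.Gamma s), hB, sub_add_cancel,
    Complex.Gamma_one, one_mul, Complex.betaIntegral]

/-- For `0 < Re t < 1/2` and real `x`,
`∫_{-∞}^{∞} e^{-lt}/(1+e^{(x-l)/2}) dl = 2π e^{-tx}/sin(2πt)`. -/
theorem full_line_kernel_integral (t : ℂ) (h1 : 0 < t.re) (h2 : t.re < 1 / 2) (x : ℝ) :
    ∫ l : ℝ, Complex.exp (-(l : ℂ) * t) / ((1 + Real.exp ((x - l) / 2) : ℝ) : ℂ) =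
      2 * (π : ℂ) * Complex.exp (-t * x) / Complex.sin (2 * (π : ℂ) * t) := by
  let G : ℝ → ℂ := fun u => (u.sigmoid : ℂ) * Complex.exp (-(u : ℂ) * (2 * t))
  have hpt (l : ℝ) : Complex.exp (-(l : ℂ) * t) / ((1 + Real.exp ((x - l) / 2) : ℝ) : ℂ) =
      Complex.exp (-t * x) * G ((l - x) / 2) := by
    have he : Complex.exp (-(l : ℂ) * t) = Complex.exp (-t * x) *
        Complex.exp (-(((l - x) / 2 : ℝ) : ℂ) * (2 * t)) := by
      rw [← Complex.exp_add]; push_cast; ring_nf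
    have hs : (x - l) / 2 = -((l - x) / 2) := by ring
    simp only [G]
    rw [he, hs, Real.sigmoid_def, Complex.ofReal_inv]
    ring
  simp_rw [hpt]
  rw [integral_const_mul, integral_sub_right_eq_self (fun l => G (l / 2)) x,
    Measure.integral_comp_div, integral_sigmoid_mul_exp (2 * t) (by simpa using h1)
      (by simp; linarith), abs_of_pos two_pos, Complex.real_smul,
    show (π : ℂ) * (2 * t) = 2 * π * t by ring]
  push_cast
  ring

end
end

section
/- Let x ≥ 0 be real and let t_1, t_2 be complex numbers with Re t_1 > 0, Re t_2 > 0, 2t_1 ∉ ℤ, 2t_2 ∉ ℤ, and t_1 ≠ t_2. Then the following four identities hold, with all series converging and all double integrals absolutely convergent: (a) ∫₀^∞∫₀^∞ e^{−l_1t_1−l_2t_2}/(1+e^{(x+l_1+l_2)/2}) dl_1dl_2 = −Σ_{k=1}^∞ (−1)^k e^{−xk/2}/((t_1+k/2)(t_2+k/2)); (b) ∫₀^∞∫₀^∞ e^{−l_1t_1−l_2t_2}/(1+e^{(x−l_1+l_2)/2}) dl_1dl_2 = 2π e^{−xt_1}/((t_1+t_2) sin(2πt_1)) − Σ_{k=1}^∞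 (−1)^k e^{−xk/2}/((t_1−k/2)(t_2+k/2)); (c) ∫₀^∞∫₀^∞ e^{−l_1t_1−l_2t_2}/(1+e^{(x+l_1−l_2)/2}) dl_1dl_2 = 2π e^{−xt_2}/((t_1+t_2) sin(2πt_2)) − Σ_{k=1}^∞ (−1)^k e^{−xk/2}/((t_1+k/2)(t_2−k/2)); (d) ∫₀^∞∫₀^∞ e^{−l_1t_1−l_2t_2}/(1+e^{(x−l_1−l_2)/2}) dl_1dl_2 = (2π/(t_1−t_2))·(e^{−xt_2}/sin(2πt_2) − e^{−xt_1}/sin(2πt_1)) − Σ_{k=1}^∞ (−1)^k e^{−xk/2}/((t_1−k/2)(t_2−k/2)). -/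
/-!
Each double integral is `∫∫ e^{-l₁t₁ - l₂t₂} h(σ l₁ + l₂)` for `σ = ±1` and a continuous bounded
`h`, namely `h s = f (x + s)` or `h s = f (x - s)` with `f y = 1 / (1 + e^{y/2})`. The shifted
Laplace transform `lap h t a = ∫₀^∞ e^{-lt} h(a + l) dl` satisfies `(lap h t)' = t · lap h t - h`,
so one integration by parts in `l₁` gives (`double_lap`)
`(t₁ - σ t₂) · ∫∫ = lap h t₂ 0 - σ · lap (h (σ ·)) t₁ 0`.
The four identities are thereby partial-fraction combinations of two one-variable expansions.

* `lap_fermi_add`: `f (x + l)` is expanded as a geometric series in `e^{-(x+l)/2}` and integrated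
  termwise. The truncation error is a single exponential (`fermi_remainder`), so its integral is
  `O(1/N)` and the argument covers the conditionally convergent case `x = 0`.
* `lap_fermi_sub`: for `f (x - l)` the integral is split at `l = x`. Beyond `x`, the reflection
  `f (-y) = 1 - f y` returns to the previous case; before `x`, the same geometric series applies.
  The terms proportional to `e^{-xt}` form `1/t + ∑ (-1)^k (1/(t + k/2) + 1/(t - k/2))`, which is
  `2π / sin 2πt` (`csc_tendsto`). Splitting the integral in this way avoids the restriction
  `Re t < 1/2` that the Mellin-type integral over the whole line would need.
-/

open scoped Real Topology
open MeasureTheory Filter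

noncomputable section

/-! ### Shifted Laplace transforms -/

/-- The shifted Laplace transform `∫₀^∞ e^{-lt} h(a + l) dl`. -/
def lap (h : ℝ → ℂ) (t : ℂ) (a : ℝ) : ℂ :=
  ∫ l in Set.Ioi (0 : ℝ), Complex.exp (-(l : ℂ) * t) * h (a + l)

theorem norm_exp_neg_mul (l : ℝ) (t : ℂ) :
    ‖Complex.exp (-(l : ℂ) * t)‖ = Real.exp (-t.re * l) := by
  rw [Complex.norm_exp]; congr 1; simp; ring

theorem lap_integrable {h : ℝ → ℂ} (hc : Continuous h) (hb : ∀ s, ‖h s‖ ≤ 1) {t : ℂ}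
    (ht : 0 < t.re) (a : ℝ) :
    IntegrableOn (fun l : ℝ => Complex.exp (-(l : ℂ) * t) * h l) (Set.Ioi a) := by
  refine Integrable.mono' (exp_neg_integrableOn_Ioi a ht)
    (Continuous.aestronglyMeasurable (by fun_prop)) (ae_of_all _ fun l => ?_)
  rw [norm_mul, norm_exp_neg_mul]
  exact mul_le_of_le_one_right (Real.exp_pos _).le (hb l)

theorem lap_eq (h : ℝ → ℂ) (t : ℂ) (a : ℝ) :
    lap h t a = Complex.exp (a * t) * ∫ s in Set.Ioi a, Complex.exp (-(s : ℂ) * t) * h s := by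
  have h1 : (∫ s in Set.Ioi a, Complex.exp (-(s : ℂ) * t) * h s) =
      ∫ l in Set.Ioi (0 : ℝ), Complex.exp (-((a + l : ℝ) : ℂ) * t) * h (a + l) := by
    have := (measurePreserving_add_left volume a).setIntegral_preimage_emb
      (measurableEmbedding_addLeft a) (fun s : ℝ => Complex.exp (-(s : ℂ) * t) * h s) (Set.Ioi a)
    simpa using this.symm
  rw [h1, ← integral_const_mul, lap]
  refine integral_congr_ae (ae_of_all _ fun l => ?_)
  simp only
  rw [← mul_assoc, ← Complex.exp_add]
  congr 2
  push_cast; ring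

theorem setIntegral_Ioi_split {h : ℝ → ℂ} (hc : Continuous h) (hb : ∀ s, ‖h s‖ ≤ 1) {t : ℂ}
    (ht : 0 < t.re) (a : ℝ) :
    (∫ s in Set.Ioi a, Complex.exp (-(s : ℂ) * t) * h s) =
      (∫ s in Set.Ioi (0 : ℝ), Complex.exp (-(s : ℂ) * t) * h s) -
        ∫ s in (0 : ℝ)..a, Complex.exp (-(s : ℂ) * t) * h s := by
  rw [← intervalIntegral.integral_Ioi_sub_Ioi' (lap_integrable hc hb ht 0)
    (lap_integrable hc hb ht a)]
  ring

theorem lap_hasDerivAt {h : ℝ → ℂ} (hc : Continuous h) (hb : ∀ s, ‖h s‖ ≤ 1) {t : ℂ}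
    (ht : 0 < t.re) (a : ℝ) : HasDerivAt (lap h t) (t * lap h t a - h a) a := by
  have hfun : lap h t = fun a : ℝ => Complex.exp (a * t) *
      ((∫ s in Set.Ioi (0 : ℝ), Complex.exp (-(s : ℂ) * t) * h s) -
        ∫ s in (0 : ℝ)..a, Complex.exp (-(s : ℂ) * t) * h s) := by
    funext b
    rw [lap_eq, setIntegral_Ioi_split hc hb ht]
  have hi : Continuous fun s : ℝ => Complex.exp (-(s : ℂ) * t) * h s := by fun_prop
  have d1 := (intervalIntegral.integral_hasDerivAt_right (hi.intervalIntegrable 0 a)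
    hi.stronglyMeasurable.stronglyMeasurableAtFilter hi.continuousAt).const_sub
    (∫ s in Set.Ioi (0 : ℝ), Complex.exp (-(s : ℂ) * t) * h s)
  have d2 : HasDerivAt (fun a : ℝ => Complex.exp (a * t)) (Complex.exp (a * t) * t) a := by
    simpa using ((Complex.ofRealCLM.hasDerivAt (x := a)).mul_const t).cexp
  have d := d2.mul d1
  rw [hfun]
  refine d.congr_deriv ?_
  have : Complex.exp (a * t) * Complex.exp (-(a : ℂ) * t) = 1 := by
    rw [← Complex.exp_add]; simp
  linear_combination (-h a) * this

theorem lap_norm_le {h : ℝ → ℂ} (hb : ∀ s, ‖h s‖ ≤ 1) {t : ℂ}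
    (ht : 0 < t.re) (a : ℝ) : ‖lap h t a‖ ≤ 1 / t.re := by
  have := norm_integral_le_of_norm_le (f := fun l : ℝ => Complex.exp (-(l : ℂ) * t) * h (a + l))
    (exp_neg_integrableOn_Ioi 0 ht) (ae_of_all _ fun l => by
      rw [norm_mul, norm_exp_neg_mul]
      exact mul_le_of_le_one_right (Real.exp_pos _).le (hb _))
  refine this.trans (le_of_eq ?_)
  rw [integral_exp_mul_Ioi (by linarith)]
  simp [neg_div_neg_eq]

/-- Absolute convergence, by comparison with `e^{-l₁ Re t₁} e^{-l₂ Re t₂}`. -/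
theorem double_integrable {h : ℝ → ℂ} (hc : Continuous h) (hb : ∀ s, ‖h s‖ ≤ 1) {t₁ t₂ : ℂ}
    (h1 : 0 < t₁.re) (h2 : 0 < t₂.re) (σ : ℝ) :
    IntegrableOn (fun q : ℝ × ℝ => Complex.exp (-(q.1 : ℂ) * t₁ - (q.2 : ℂ) * t₂) *
      h (σ * q.1 + q.2)) (Set.Ioi 0 ×ˢ Set.Ioi 0) := by
  have hp := (exp_neg_integrableOn_Ioi 0 h1).mul_prod (exp_neg_integrableOn_Ioi 0 h2)
  rw [Measure.prod_restrict] at hp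
  refine Integrable.mono' hp (Continuous.aestronglyMeasurable (by fun_prop))
    (ae_of_all _ fun q => ?_)
  rw [← norm_exp_neg_mul, ← norm_exp_neg_mul, ← norm_mul, ← Complex.exp_add, norm_mul,
    sub_eq_add_neg, ← neg_mul]
  exact mul_le_of_le_one_right (norm_nonneg _) (hb _)

/-- Double transforms of a function of `σ l₁ + l₂` reduce to single ones: integrate `e^{-l t₁} · lap h t₂ (σ l)` by parts, using the differential equation
`(lap h t)' = t · lap h t - h`. -/
theorem double_lap {h : ℝ → ℂ} (hc : Continuous h) (hb : ∀ s, ‖h s‖ ≤ 1) {t₁ t₂ : ℂ}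
    (h1 : 0 < t₁.re) (h2 : 0 < t₂.re) (σ : ℝ) :
    (t₁ - σ * t₂) * (∫ l₁ in Set.Ioi (0 : ℝ), ∫ l₂ in Set.Ioi (0 : ℝ),
      Complex.exp (-(l₁ : ℂ) * t₁ - (l₂ : ℂ) * t₂) * h (σ * l₁ + l₂)) =
      lap h t₂ 0 - σ * lap (fun s => h (σ * s)) t₁ 0 := by
  have hin : ∀ l₁ : ℝ, (∫ l₂ in Set.Ioi (0 : ℝ),
      Complex.exp (-(l₁ : ℂ) * t₁ - (l₂ : ℂ) * t₂) * h (σ * l₁ + l₂)) =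
      Complex.exp (-(l₁ : ℂ) * t₁) * lap h t₂ (σ * l₁) := by
    intro l₁
    rw [lap, ← integral_const_mul]
    refine integral_congr_ae (ae_of_all _ fun l => ?_)
    simp only
    rw [← mul_assoc, ← Complex.exp_add]
    congr 2
    ring
  simp_rw [hin]
  have hd : ∀ l : ℝ, HasDerivAt (fun l : ℝ => lap h t₂ (σ * l))
      (σ * (t₂ * lap h t₂ (σ * l) - h (σ * l))) l := by
    intro l
    have := (lap_hasDerivAt hc hb h2 (σ * l)).scomp l ((hasDerivAt_id l).const_mul σ)
    simpa [Function.comp_def] using this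
  have hcont : Continuous fun l : ℝ => lap h t₂ (σ * l) :=
    continuous_iff_continuousAt.2 fun l => (hd l).continuousAt
  have hgi : IntegrableOn (fun l : ℝ => Complex.exp (-(l : ℂ) * t₁) * lap h t₂ (σ * l))
      (Set.Ioi 0) := by
    refine Integrable.mono' ((exp_neg_integrableOn_Ioi 0 h1).mul_const (1 / t₂.re))
      (Continuous.aestronglyMeasurable (by fun_prop)) (ae_of_all _ fun l => ?_)
    rw [norm_mul, norm_exp_neg_mul]
    exact mul_le_mul_of_nonneg_left (lap_norm_le hb h2 _) (Real.exp_pos _).le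
  have hhi : IntegrableOn (fun l : ℝ => Complex.exp (-(l : ℂ) * t₁) * h (σ * l)) (Set.Ioi 0) :=
    lap_integrable (h := fun s => h (σ * s)) (by fun_prop) (fun s => hb _) h1 0
  have hD : ∀ l ∈ Set.Ici (0 : ℝ), HasDerivAt
      (fun l : ℝ => Complex.exp (-(l : ℂ) * t₁) * lap h t₂ (σ * l))
      (-(t₁ - σ * t₂) * (Complex.exp (-(l : ℂ) * t₁) * lap h t₂ (σ * l)) -
        σ * (Complex.exp (-(l : ℂ) * t₁) * h (σ * l))) l := by
    intro l _
    have d2 : HasDerivAt (fun a : ℝ => Complex.exp (-(a : ℂ) * t₁))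
        (Complex.exp (-(l : ℂ) * t₁) * (-t₁)) l := by
      simpa using ((Complex.ofRealCLM.hasDerivAt (x := l)).neg.mul_const t₁).cexp
    refine (d2.mul (hd l)).congr_deriv ?_
    ring
  have hlim : Tendsto (fun l : ℝ => Complex.exp (-(l : ℂ) * t₁) * lap h t₂ (σ * l))
      atTop (𝓝 0) := by
    have he : Tendsto (fun l : ℝ => Real.exp (-t₁.re * l) * (1 / t₂.re)) atTop (𝓝 0) := by
      have := (Real.tendsto_exp_atBot.comp
        (tendsto_id.const_mul_atTop_of_neg (neg_neg_iff_pos.2 h1))).mul_const (1 / t₂.re)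
      simpa using this
    refine squeeze_zero_norm (fun l => ?_) he
    rw [norm_mul, norm_exp_neg_mul]
    exact mul_le_mul_of_nonneg_left (lap_norm_le hb h2 _) (Real.exp_pos _).le
  have key := integral_Ioi_of_hasDerivAt_of_tendsto' hD
    ((hgi.const_mul _).sub (hhi.const_mul _)) hlim
  rw [integral_sub (hgi.const_mul _) (hhi.const_mul _), integral_const_mul,
    integral_const_mul] at key
  have hl : lap (fun s => h (σ * s)) t₁ 0 =
      ∫ l in Set.Ioi (0 : ℝ), Complex.exp (-(l : ℂ) * t₁) * h (σ * l) := by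
    simp [lap]
  rw [hl]
  simp only [Complex.ofReal_zero, neg_zero, zero_mul, Complex.exp_zero, mul_zero, one_mul] at key
  linear_combination -key

/-! ### The cosecant series -/

/-- Partial fractions of the cosecant, from the cotangent expansion and
`1 / sin 2a = cot a - cot 2a`. -/
theorem csc_tendsto {t : ℂ} (hz : ∀ k : ℤ, 2 * t ≠ (k : ℂ)) :
    Tendsto (fun N : ℕ => ∑ k ∈ Finset.Icc 1 N, (-1 : ℂ) ^ k * (1 / (t + k / 2) + 1 / (t - k / 2)))
      atTop (𝓝 (2 * π / Complex.sin (2 * π * t) - 1 / t)) := by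
  have ht0 : t ≠ 0 := by
    rintro rfl; exact hz 0 (by simp)
  have hA : 2 * t ∈ Complex.integerComplement := by
    rintro ⟨k, hk⟩; exact hz k hk.symm
  have hB : t ∈ Complex.integerComplement := by
    rintro ⟨k, hk⟩; exact hz (2 * k) (by push_cast; rw [hk])
  have sA := (Summable.hasSum_iff_tendsto_nat (summable_cotTerm hA)).mpr
    (tendsto_logDeriv_euler_cot_sub hA)
  have sB := (Summable.hasSum_iff_tendsto_nat (summable_cotTerm hB)).mpr
    (tendsto_logDeriv_euler_cot_sub hB)
  -- The index starts at `0`, where the term is `2 / t`; this lets even and all indices be compared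
  -- on `ℕ`. The sum over all `k` is a cotangent at `2t`, that over even `k` a cotangent at `t`.
  let a : ℕ → ℂ := fun k => 1 / (t + k / 2) + 1 / (t - k / 2)
  have hsin : Complex.sin (2 * π * t) ≠ 0 := by
    have := sin_pi_mul_ne_zero hA
    rwa [show (π : ℂ) * (2 * t) = 2 * π * t by ring] at this
  have hsin1 : Complex.sin (π * t) ≠ 0 := sin_pi_mul_ne_zero hB
  have hs : ∀ u : ℂ, 1 / (2 * u) = 1 / 2 * (1 / u) := fun u => by
    rw [one_div_mul_one_div]
  have sA' : HasSum a (2 * (π * Complex.cot (π * (2 * t)) - 1 / (2 * t)) + 2 / t) := by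
    rw [← hasSum_nat_add_iff' 1]
    convert! sA.mul_left 2 using 1
    · funext n
      simp only [a, cotTerm]
      rw [show 2 * t - ((n : ℂ) + 1) = 2 * (t - ((n + 1 : ℕ) : ℂ) / 2) by push_cast; ring,
        show 2 * t + ((n : ℂ) + 1) = 2 * (t + ((n + 1 : ℕ) : ℂ) / 2) by push_cast; ring, hs, hs]
      ring
    · simp [a]; ring
  have sB' : HasSum (fun k => a (2 * k)) (π * Complex.cot (π * t) - 1 / t + 2 / t) := by
    rw [← hasSum_nat_add_iff' 1]
    convert! sB using 1
    · funext n
      simp only [a, cotTerm]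
      rw [show t - ((n : ℂ) + 1) = (t - ((2 * (n + 1) : ℕ) : ℂ) / 2) by push_cast; ring,
        show t + ((n : ℂ) + 1) = (t + ((2 * (n + 1) : ℕ) : ℂ) / 2) by push_cast; ring]
      ring
    · simp [a]; ring
  have hinj : Function.Injective (fun k : ℕ => 2 * k) := fun i j h => by simpa using h
  have sB'' : HasSum (fun k => if Even k then a k else 0)
      (π * Complex.cot (π * t) - 1 / t + 2 / t) := by
    rw [← hinj.hasSum_iff]
    · simpa [Function.comp_def] using sB'
    · intro k hk
      rw [if_neg]
      rintro ⟨r, hr⟩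
      exact hk ⟨r, by simp only; omega⟩
  -- `(-1)^k = 2 · 1_{k even} - 1`.
  have sC := (sB''.mul_left 2).sub sA'
  have sD : HasSum (fun k => (-1 : ℂ) ^ (k + 1) * a (k + 1))
      (2 * π / Complex.sin (2 * π * t) - 1 / t) := by
    rw [hasSum_nat_add_iff (f := fun k => (-1 : ℂ) ^ k * a k) 1]
    convert! sC using 1
    · funext k
      rcases Nat.even_or_odd k with hk | hk
      · simp [hk, hk.neg_one_pow]; ring
      · simp [hk.neg_one_pow, Nat.not_even_iff_odd.2 hk]
    · rw [Complex.cot, Complex.cot, show (π : ℂ) * (2 * t) = 2 * (π * t) by ring,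
        show 2 * (π : ℂ) * t = 2 * (π * t) by ring, Complex.sin_two_mul, Complex.cos_two_mul]
      have hcos : Complex.cos (π * t) ≠ 0 := by
        intro h0
        apply hsin
        rw [show 2 * (π : ℂ) * t = 2 * (π * t) by ring, Complex.sin_two_mul, h0, mul_zero]
      simp [a]
      field_simp
      ring
  have := sD.tendsto_sum_nat
  refine this.congr fun N => ?_
  rw [Finset.range_eq_Ico, Finset.sum_Ico_add' (fun k => (-1 : ℂ) ^ k * a k) 0 N 1]
  rfl

/-! ### The kernel and its geometric expansion -/

/-- The kernel `1 / (1 + e^{y/2})`, as a complex number. -/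
def fermi (y : ℝ) : ℂ := 1 / ((1 + Real.exp (y / 2) : ℝ) : ℂ)

theorem fermi_continuous : Continuous fermi := by
  unfold fermi
  refine continuous_const.div (by fun_prop) fun y => ?_
  exact_mod_cast (by positivity : (0 : ℝ) < 1 + Real.exp (y / 2)).ne'

theorem fermi_norm_le (y : ℝ) : ‖fermi y‖ ≤ 1 := by
  have : (0 : ℝ) < 1 + Real.exp (y / 2) := by positivity
  rw [fermi, norm_div, norm_one, Complex.norm_real, Real.norm_of_nonneg this.le,
    div_le_one this]
  linarith [Real.exp_pos (y / 2)]

theorem fermi_neg (y : ℝ) : fermi (-y) = 1 - fermi y := by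
  have h : 1 / (1 + Real.exp (-y / 2)) = 1 - 1 / (1 + Real.exp (y / 2)) := by
    rw [neg_div, Real.exp_neg]
    have := Real.exp_pos (y / 2)
    field_simp
    ring
  unfold fermi
  exact_mod_cast congrArg (fun r : ℝ => (r : ℂ)) h

/-- The error of the truncated geometric expansion of the kernel: it equals
`(-1)^N e^{-yN/2} / (1 + e^{y/2})`. The bound holds for every real `y`, although the series itself
only converges for `y > 0`. -/
theorem fermi_remainder (y : ℝ) (N : ℕ) :
    ‖fermi y + ∑ k ∈ Finset.Icc 1 N, (-1 : ℂ) ^ k * Complex.exp (-(y : ℂ) * k / 2)‖ ≤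
      Real.exp (-(((N : ℝ) + 1) / 2) * y) := by
  have hpos : (0 : ℝ) < 1 + Real.exp (y / 2) := by positivity
  have hq : ∀ k : ℕ, Complex.exp (-(y : ℂ) * k / 2) = ((Real.exp (-y / 2) ^ k : ℝ) : ℂ) := by
    intro k
    rw [← Real.exp_nat_mul]
    push_cast
    congr 1; ring
  have hinv : Real.exp (-y / 2) * Real.exp (y / 2) = 1 := by
    rw [← Real.exp_add]; simp [neg_div]
  have hsum : 1 / (1 + Real.exp (y / 2)) +
      ∑ k ∈ Finset.Icc 1 N, (-1 : ℝ) ^ k * Real.exp (-y / 2) ^ k =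
      (-1) ^ N * Real.exp (-y / 2) ^ N * (1 / (1 + Real.exp (y / 2))) := by
    clear hq
    generalize Real.exp (-y / 2) = q at *
    generalize Real.exp (y / 2) = e at *
    induction N with
    | zero => simp
    | succ n ih =>
      rw [Finset.sum_Icc_succ_top (by omega), ← add_assoc, ih, pow_succ q, pow_succ (-1 : ℝ)]
      field_simp
      linear_combination (-q ^ n) * hinv
  have hC : fermi y + ∑ k ∈ Finset.Icc 1 N, (-1 : ℂ) ^ k * Complex.exp (-(y : ℂ) * k / 2) =
      (((-1) ^ N * Real.exp (-y / 2) ^ N * (1 / (1 + Real.exp (y / 2))) : ℝ) : ℂ) := by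
    rw [← hsum]
    simp_rw [hq]
    simp [fermi]
  rw [hC, Complex.norm_real, norm_mul, norm_mul, norm_pow, norm_neg, norm_one, one_pow, one_mul,
    Real.norm_of_nonneg (by positivity), Real.norm_of_nonneg (by positivity)]
  have h2 : Real.exp (-(((N : ℝ) + 1) / 2) * y) = Real.exp (-y / 2) ^ N * Real.exp (-y / 2) := by
    rw [← pow_succ, ← Real.exp_nat_mul]
    congr 1; push_cast; ring
  rw [h2]
  refine mul_le_mul_of_nonneg_left ?_ (by positivity)
  rw [div_le_iff₀ hpos, mul_add, hinv]
  linarith [Real.exp_pos (-y / 2)]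

/-- Truncation errors integrate to `O(1/N)`, since `∫₀^∞ e^{-(N+1)u/2} du = 2/(N+1)`. -/
theorem tendsto_integral_zero {s : Set ℝ} (hs : MeasurableSet s) (hs0 : s ⊆ Set.Ioi 0) (C : ℝ)
    (f : ℕ → ℝ → ℂ)
    (hf : ∀ N, ∀ u ∈ s, ‖f N u‖ ≤ C * Real.exp (-(((N : ℝ) + 1) / 2) * u)) :
    Tendsto (fun N => ∫ u in s, f N u) atTop (𝓝 0) := by
  have hlim : Tendsto (fun N : ℕ => |C| * 2 * (1 / ((N : ℝ) + 1))) atTop (𝓝 0) := by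
    simpa using tendsto_one_div_add_atTop_nhds_zero_nat.const_mul (|C| * 2)
  refine squeeze_zero_norm (fun N => ?_) hlim
  have hN : (0 : ℝ) < ((N : ℝ) + 1) / 2 := by positivity
  have hint : IntegrableOn (fun u => |C| * Real.exp (-(((N : ℝ) + 1) / 2) * u)) (Set.Ioi 0) :=
    (exp_neg_integrableOn_Ioi 0 hN).const_mul _
  calc ‖∫ u in s, f N u‖ ≤ ∫ u in s, |C| * Real.exp (-(((N : ℝ) + 1) / 2) * u) := by
        refine norm_integral_le_of_norm_le (hint.mono_set hs0) ?_
        filter_upwards [ae_restrict_mem hs] with u hu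
        exact (hf N u hu).trans (mul_le_mul_of_nonneg_right (le_abs_self C) (Real.exp_pos _).le)
    _ ≤ ∫ u in Set.Ioi (0 : ℝ), |C| * Real.exp (-(((N : ℝ) + 1) / 2) * u) :=
        setIntegral_mono_set hint (ae_of_all _ fun u => by positivity)
          (LE.le.eventuallyLE hs0)
    _ = |C| * 2 * (1 / ((N : ℝ) + 1)) := by
        rw [integral_const_mul, integral_exp_mul_Ioi (by linarith)]
        simp
        field_simp

/-! ### The two one-variable expansions -/

/-- Expansion of the transform of `l ↦ 1 / (1 + e^{(x+l)/2})`. -/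
theorem lap_fermi_add {x : ℝ} (hx : 0 ≤ x) {t : ℂ} (ht : 0 < t.re) :
    Tendsto (fun N : ℕ => ∑ k ∈ Finset.Icc 1 N,
      (-1 : ℂ) ^ k * Complex.exp (-(x : ℂ) * k / 2) / (t + k / 2)) atTop
      (𝓝 (-lap (fun s => fermi (x + s)) t 0)) := by
  have hint : IntegrableOn (fun l : ℝ => Complex.exp (-(l : ℂ) * t) * fermi (x + l)) (Set.Ioi 0) :=
    lap_integrable (h := fun s => fermi (x + s)) (fermi_continuous.comp (by fun_prop))
      (fun s => fermi_norm_le _) ht 0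
  have hre : ∀ k : ℕ, (-(t + k / 2)).re < 0 := by
    intro k
    have : (0 : ℝ) ≤ k := by positivity
    have h2 : ((k : ℂ) / 2).re = (k : ℝ) / 2 := by
      rw [show ((k : ℂ) / 2) = ((k / 2 : ℝ) : ℂ) by push_cast; rfl, Complex.ofReal_re]
    rw [Complex.neg_re, Complex.add_re, h2]
    linarith
  have hterm : ∀ (k : ℕ) (l : ℝ), Complex.exp (-(l : ℂ) * t) *
      ((-1 : ℂ) ^ k * Complex.exp (-((x + l : ℝ) : ℂ) * k / 2)) =
      ((-1 : ℂ) ^ k * Complex.exp (-(x : ℂ) * k / 2)) * Complex.exp (-(t + k / 2) * l) := by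
    intro k l
    rw [mul_left_comm, mul_assoc, ← Complex.exp_add, ← Complex.exp_add]
    congr 2
    push_cast; ring
  have hti : ∀ k : ℕ, IntegrableOn (fun l : ℝ => Complex.exp (-(l : ℂ) * t) *
      ((-1 : ℂ) ^ k * Complex.exp (-((x + l : ℝ) : ℂ) * k / 2))) (Set.Ioi 0) := by
    intro k
    simp_rw [hterm]
    exact (integrableOn_exp_mul_complex_Ioi (hre k) 0).const_mul _
  have h0 := tendsto_integral_zero (s := Set.Ioi (0 : ℝ)) measurableSet_Ioi subset_rfl 1
    (fun N l => Complex.exp (-(l : ℂ) * t) * (fermi (x + l) +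
      ∑ k ∈ Finset.Icc 1 N, (-1 : ℂ) ^ k * Complex.exp (-((x + l : ℝ) : ℂ) * k / 2))) (by
    intro N l hl
    have hl' : 0 < l := hl
    rw [norm_mul, norm_exp_neg_mul]
    refine mul_le_mul (Real.exp_le_one_iff.2 (by nlinarith)) ((fermi_remainder _ N).trans ?_)
      (norm_nonneg _) zero_le_one
    refine Real.exp_le_exp.2 ?_
    have : 0 ≤ ((N : ℝ) + 1) / 2 * x := by positivity
    linarith)
  have h1 : ∀ N : ℕ, (∫ l in Set.Ioi (0 : ℝ), Complex.exp (-(l : ℂ) * t) * (fermi (x + l) +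
      ∑ k ∈ Finset.Icc 1 N, (-1 : ℂ) ^ k * Complex.exp (-((x + l : ℝ) : ℂ) * k / 2))) =
      lap (fun s => fermi (x + s)) t 0 + ∑ k ∈ Finset.Icc 1 N,
        (-1 : ℂ) ^ k * Complex.exp (-(x : ℂ) * k / 2) / (t + k / 2) := by
    intro N
    simp_rw [mul_add, Finset.mul_sum]
    rw [integral_add hint (integrable_finsetSum _ fun k _ => hti k),
      integral_finsetSum _ fun k _ => hti k]
    congr 1
    · simp [lap]
    · refine Finset.sum_congr rfl fun k _ => ?_
      simp_rw [hterm]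
      rw [integral_const_mul, integral_exp_mul_complex_Ioi (hre k), Complex.ofReal_zero, mul_zero,
        Complex.exp_zero, neg_div_neg_eq, mul_one_div]
  simp_rw [h1] at h0
  simpa using h0.sub_const (lap (fun s => fermi (x + s)) t 0)

/-- Expansion of the transform of `l ↦ 1 / (1 + e^{(x-l)/2})`. On `l > x` the reflection
`1 / (1 + e^{-y}) = 1 - 1 / (1 + e^y)` reduces it to the previous expansion at `x = 0`, on `l < x`
the geometric series is integrated termwise, and the constant terms in both add up to the
cosecant series. -/
theorem lap_fermi_sub {x : ℝ} (hx : 0 ≤ x) {t : ℂ} (ht : 0 < t.re)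
    (hz : ∀ k : ℤ, 2 * t ≠ (k : ℂ)) :
    Tendsto (fun N : ℕ => ∑ k ∈ Finset.Icc 1 N,
      (-1 : ℂ) ^ k * Complex.exp (-(x : ℂ) * k / 2) / (t - k / 2)) atTop
      (𝓝 (2 * π * Complex.exp (-x * t) / Complex.sin (2 * π * t) -
        lap (fun s => fermi (x - s)) t 0)) := by
  have hne : ∀ k : ℕ, t - k / 2 ≠ 0 := by
    intro k h
    refine hz k ?_
    push_cast
    linear_combination 2 * h
  have ht0 : t ≠ 0 := by
    rintro rfl; simp at ht
  let J : ℂ := ∫ u in (0 : ℝ)..x, Complex.exp ((u : ℂ) * t) * fermi u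
  have hcn : Continuous fun s : ℝ => fermi (-s) := fermi_continuous.comp (by fun_prop)
  have hF : lap (fun s => fermi (x - s)) t 0 =
      Complex.exp (-x * t) * (1 / t - lap (fun s => fermi (0 + s)) t 0 + J) := by
    have e1 : lap (fun s => fermi (x - s)) t 0 = lap (fun s => fermi (-s)) t (-x) := by
      unfold lap
      refine integral_congr_ae (ae_of_all _ fun l => ?_)
      simp only
      congr 2; ring
    have e2 : (∫ s in (0 : ℝ)..(-x), Complex.exp (-(s : ℂ) * t) * fermi (-s)) = -J := by
      have := intervalIntegral.integral_comp_neg (a := 0) (b := -x)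
        (fun u : ℝ => Complex.exp ((u : ℂ) * t) * fermi u)
      simp only [Complex.ofReal_neg, neg_neg, neg_zero] at this
      rw [this, intervalIntegral.integral_symm]
    have e3 : (∫ s in Set.Ioi (0 : ℝ), Complex.exp (-(s : ℂ) * t) * fermi (-s)) =
        1 / t - lap (fun s => fermi (0 + s)) t 0 := by
      simp_rw [fermi_neg, mul_sub, mul_one]
      have hcomm : ∀ s : ℝ, Complex.exp (-(s : ℂ) * t) = Complex.exp (-t * s) := fun s => by
        congr 1; ring
      have hi1 : IntegrableOn (fun s : ℝ => Complex.exp (-(s : ℂ) * t)) (Set.Ioi 0) := by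
        simp_rw [hcomm]
        exact integrableOn_exp_mul_complex_Ioi (by simpa using ht) 0
      rw [integral_sub hi1 (lap_integrable fermi_continuous fermi_norm_le ht 0)]
      congr 1
      · simp_rw [hcomm]
        rw [integral_exp_mul_complex_Ioi (by simpa using ht)]
        simp [neg_div_neg_eq]
      · simp [lap]
    rw [e1, lap_eq, setIntegral_Ioi_split hcn (fun s => fermi_norm_le _) ht, e2, e3]
    push_cast
    ring
  have hterm : ∀ (k : ℕ) (u : ℝ), Complex.exp ((u : ℂ) * t) *
      ((-1 : ℂ) ^ k * Complex.exp (-(u : ℂ) * k / 2)) =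
      (-1 : ℂ) ^ k * Complex.exp ((t - k / 2) * u) := by
    intro k l
    rw [mul_left_comm, ← Complex.exp_add]
    congr 2
    ring
  have h0 := tendsto_integral_zero (s := Set.Ioc 0 x) measurableSet_Ioc (fun u hu => hu.1)
    (Real.exp (t.re * x))
    (fun N u => Complex.exp ((u : ℂ) * t) * (fermi u +
      ∑ k ∈ Finset.Icc 1 N, (-1 : ℂ) ^ k * Complex.exp (-(u : ℂ) * k / 2))) (by
    intro N u hu
    rw [norm_mul]
    refine mul_le_mul ?_ (fermi_remainder _ N) (norm_nonneg _) (Real.exp_pos _).le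
    rw [Complex.norm_exp]
    refine Real.exp_le_exp.2 ?_
    have := hu.2
    simp
    nlinarith)
  have h1 : ∀ N : ℕ, (∫ u in Set.Ioc 0 x, Complex.exp ((u : ℂ) * t) * (fermi u +
      ∑ k ∈ Finset.Icc 1 N, (-1 : ℂ) ^ k * Complex.exp (-(u : ℂ) * k / 2))) =
      J + ∑ k ∈ Finset.Icc 1 N,
        (-1 : ℂ) ^ k * ((Complex.exp ((t - k / 2) * x) - 1) / (t - k / 2)) := by
    intro N
    rw [← intervalIntegral.integral_of_le hx]
    simp_rw [mul_add, Finset.mul_sum]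
    have hfc := fermi_continuous
    rw [intervalIntegral.integral_add (Continuous.intervalIntegrable (by fun_prop) _ _)
      (Continuous.intervalIntegrable (by fun_prop) _ _),
      intervalIntegral.integral_finsetSum
        (fun k _ => Continuous.intervalIntegrable (by fun_prop) _ _)]
    congr 1
    refine Finset.sum_congr rfl fun k _ => ?_
    simp_rw [hterm]
    rw [intervalIntegral.integral_const_mul, integral_exp_mul_complex (hne k)]
    simp
  simp_rw [h1] at h0
  have hG := lap_fermi_add (x := 0) le_rfl ht
  have hcsc := csc_tendsto hz
  -- `(e^{(t-k/2)x} - 1)/(t - k/2) - 1/(t + k/2) + (1/(t + k/2) + 1/(t - k/2))` is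
  -- `e^{(t-k/2)x}/(t - k/2)`, so the constant terms cancel before any limit is split.
  have hall := ((h0.sub_const J).sub (hG.sub hcsc)).const_mul (Complex.exp (-x * t))
  rw [hF]
  convert! hall using 1
  · funext N
    rw [add_sub_cancel_left, ← Finset.sum_sub_distrib, ← Finset.sum_sub_distrib, Finset.mul_sum]
    refine Finset.sum_congr rfl fun k _ => ?_
    have hE : Complex.exp (-(x : ℂ) * k / 2) =
        Complex.exp (-x * t) * Complex.exp ((t - k / 2) * x) := by
      rw [← Complex.exp_add]; congr 1; ring
    rw [hE]
    simp
    ring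
  · congr 1
    ring

/-! ### Assembly -/

theorem partial_fraction_sub {a b s E : ℂ} (ha : a ≠ 0) (hb : b ≠ 0) (hs : s ≠ 0)
    (h : s = a - b) : E / (a * b) = -1 / s * (E / a) + 1 / s * (E / b) := by
  field_simp
  rw [h]; ring

theorem partial_fraction_add {a b s E : ℂ} (ha : a ≠ 0) (hb : b ≠ 0) (hs : s ≠ 0)
    (h : s = a + b) : E / (a * b) = 1 / s * (E / a) + 1 / s * (E / b) := by
  field_simp
  rw [h]; ring

/-- A linear combination of two convergent series, in the shape in which the four identities are
stated. -/
theorem exists_expansion {u v : ℕ → ℂ} {A B : ℂ} {w : ℕ → ℂ} (c d : ℂ) {I R : ℂ}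
    (hu : Tendsto (fun N : ℕ => ∑ k ∈ Finset.Icc 1 N, u k) atTop (𝓝 A))
    (hv : Tendsto (fun N : ℕ => ∑ k ∈ Finset.Icc 1 N, v k) atTop (𝓝 B))
    (hw : ∀ k, w k = c * u k + d * v k) (hI : I = R - (c * A + d * B)) :
    ∃ S : ℂ, Tendsto (fun N : ℕ => ∑ k ∈ Finset.Icc 1 N, w k) atTop (𝓝 S) ∧ I = R - S := by
  refine ⟨c * A + d * B, ?_, hI⟩
  simp_rw [hw, Finset.sum_add_distrib, ← Finset.mul_sum]
  exact (hu.const_mul c).add (hv.const_mul d)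

/-- The four two-variable kernel expansions of Lemma 3
(Lem_Int_Expansion2): for `x ≥ 0`, `Re t₁, Re t₂ > 0`, `2t₁, 2t₂ ∉ ℤ` and `t₁ ≠ t₂`,
with all double integrals absolutely convergent and all series convergent. -/
theorem double_laplace_kernel_expansions (x : ℝ) (hx : 0 ≤ x) (t₁ t₂ : ℂ)
    (h1 : 0 < t₁.re) (h2 : 0 < t₂.re)
    (hz1 : ∀ k : ℤ, 2 * t₁ ≠ (k : ℂ)) (hz2 : ∀ k : ℤ, 2 * t₂ ≠ (k : ℂ))
    (hne : t₁ ≠ t₂) :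
    (IntegrableOn (fun q : ℝ × ℝ => (fun l₁ l₂ : ℝ => Complex.exp (-(l₁ : ℂ) * t₁ - (l₂ : ℂ) * t₂) / ((1 + Real.exp ((x + l₁ + l₂) / 2) : ℝ) : ℂ)) q.1 q.2)
        (Set.Ioi 0 ×ˢ Set.Ioi 0) ∧
      ∃ S : ℂ,
        Tendsto (fun N : ℕ => ∑ k ∈ Finset.Icc 1 N,
            (-1 : ℂ) ^ k * Complex.exp (-(x : ℂ) * k / 2) / ((t₁ + k / 2) * (t₂ + k / 2)))
          atTop (𝓝 S) ∧
        (∫ l₁ in Set.Ioi (0 : ℝ), ∫ l₂ in Set.Ioi (0 : ℝ),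
            (fun l₁ l₂ : ℝ => Complex.exp (-(l₁ : ℂ) * t₁ - (l₂ : ℂ) * t₂) / ((1 + Real.exp ((x + l₁ + l₂) / 2) : ℝ) : ℂ)) l₁ l₂) = -S) ∧
    (IntegrableOn (fun q : ℝ × ℝ => (fun l₁ l₂ : ℝ => Complex.exp (-(l₁ : ℂ) * t₁ - (l₂ : ℂ) * t₂) / ((1 + Real.exp ((x - l₁ + l₂) / 2) : ℝ) : ℂ)) q.1 q.2)
        (Set.Ioi 0 ×ˢ Set.Ioi 0) ∧
      ∃ S : ℂ,
        Tendsto (fun N : ℕ => ∑ k ∈ Finset.Icc 1 N,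
            (-1 : ℂ) ^ k * Complex.exp (-(x : ℂ) * k / 2) / ((t₁ - k / 2) * (t₂ + k / 2)))
          atTop (𝓝 S) ∧
        (∫ l₁ in Set.Ioi (0 : ℝ), ∫ l₂ in Set.Ioi (0 : ℝ),
            (fun l₁ l₂ : ℝ => Complex.exp (-(l₁ : ℂ) * t₁ - (l₂ : ℂ) * t₂) / ((1 + Real.exp ((x - l₁ + l₂) / 2) : ℝ) : ℂ)) l₁ l₂) =
          2 * (π : ℂ) * Complex.exp (-x * t₁) /
            ((t₁ + t₂) * Complex.sin (2 * (π : ℂ) * t₁)) - S) ∧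
    (IntegrableOn (fun q : ℝ × ℝ => (fun l₁ l₂ : ℝ => Complex.exp (-(l₁ : ℂ) * t₁ - (l₂ : ℂ) * t₂) / ((1 + Real.exp ((x + l₁ - l₂) / 2) : ℝ) : ℂ)) q.1 q.2)
        (Set.Ioi 0 ×ˢ Set.Ioi 0) ∧
      ∃ S : ℂ,
        Tendsto (fun N : ℕ => ∑ k ∈ Finset.Icc 1 N,
            (-1 : ℂ) ^ k * Complex.exp (-(x : ℂ) * k / 2) / ((t₁ + k / 2) * (t₂ - k / 2)))
          atTop (𝓝 S) ∧
        (∫ l₁ in Set.Ioi (0 : ℝ), ∫ l₂ in Set.Ioi (0 : ℝ),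
            (fun l₁ l₂ : ℝ => Complex.exp (-(l₁ : ℂ) * t₁ - (l₂ : ℂ) * t₂) / ((1 + Real.exp ((x + l₁ - l₂) / 2) : ℝ) : ℂ)) l₁ l₂) =
          2 * (π : ℂ) * Complex.exp (-x * t₂) /
            ((t₁ + t₂) * Complex.sin (2 * (π : ℂ) * t₂)) - S) ∧
    (IntegrableOn (fun q : ℝ × ℝ => (fun l₁ l₂ : ℝ => Complex.exp (-(l₁ : ℂ) * t₁ - (l₂ : ℂ) * t₂) / ((1 + Real.exp ((x - l₁ - l₂) / 2) : ℝ) : ℂ)) q.1 q.2)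
        (Set.Ioi 0 ×ˢ Set.Ioi 0) ∧
      ∃ S : ℂ,
        Tendsto (fun N : ℕ => ∑ k ∈ Finset.Icc 1 N,
            (-1 : ℂ) ^ k * Complex.exp (-(x : ℂ) * k / 2) / ((t₁ - k / 2) * (t₂ - k / 2)))
          atTop (𝓝 S) ∧
        (∫ l₁ in Set.Ioi (0 : ℝ), ∫ l₂ in Set.Ioi (0 : ℝ),
            (fun l₁ l₂ : ℝ => Complex.exp (-(l₁ : ℂ) * t₁ - (l₂ : ℂ) * t₂) / ((1 + Real.exp ((x - l₁ - l₂) / 2) : ℝ) : ℂ)) l₁ l₂) =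
          2 * (π : ℂ) / (t₁ - t₂) *
            (Complex.exp (-x * t₂) / Complex.sin (2 * (π : ℂ) * t₂) -
             Complex.exp (-x * t₁) / Complex.sin (2 * (π : ℂ) * t₁)) - S) := by
  have hfc := fermi_continuous
  have cA : Continuous fun s : ℝ => fermi (x + s) := hfc.comp (by fun_prop)
  have cB : Continuous fun s : ℝ => fermi (x - s) := hfc.comp (by fun_prop)
  have bA : ∀ s : ℝ, ‖fermi (x + s)‖ ≤ 1 := fun s => fermi_norm_le _
  have bB : ∀ s : ℝ, ‖fermi (x - s)‖ ≤ 1 := fun s => fermi_norm_le _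
  have pn : ∀ {t : ℂ}, 0 < t.re → ∀ k : ℕ, t + k / 2 ≠ 0 := by
    intro t ht k h
    have h' := congrArg Complex.re h
    rw [show ((k : ℂ) / 2) = ((k / 2 : ℝ) : ℂ) by push_cast; rfl, Complex.add_re,
      Complex.ofReal_re, Complex.zero_re] at h'
    have : (0 : ℝ) ≤ k / 2 := by positivity
    linarith
  have mn : ∀ {t : ℂ}, (∀ k : ℤ, 2 * t ≠ (k : ℂ)) → ∀ k : ℕ, t - k / 2 ≠ 0 := by
    intro t hz k h
    refine hz k ?_
    push_cast
    linear_combination 2 * h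
  have hsub : t₁ - t₂ ≠ 0 := sub_ne_zero.2 hne
  have hadd : t₁ + t₂ ≠ 0 := by
    intro h
    have := congrArg Complex.re h
    rw [Complex.add_re, Complex.zero_re] at this
    linarith
  have hs1 : Complex.sin (2 * π * t₁) ≠ 0 := by
    have := sin_pi_mul_ne_zero (x := 2 * t₁) (by rintro ⟨k, hk⟩; exact hz1 k hk.symm)
    rwa [show (π : ℂ) * (2 * t₁) = 2 * π * t₁ by ring] at this
  have hs2 : Complex.sin (2 * π * t₂) ≠ 0 := by
    have := sin_pi_mul_ne_zero (x := 2 * t₂) (by rintro ⟨k, hk⟩; exact hz2 k hk.symm)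
    rwa [show (π : ℂ) * (2 * t₂) = 2 * π * t₂ by ring] at this
  have G1 := lap_fermi_add hx h1
  have G2 := lap_fermi_add hx h2
  have F1 := lap_fermi_sub hx h1 hz1
  have F2 := lap_fermi_sub hx h2 hz2
  have kA : ∀ l₁ l₂ : ℝ, Complex.exp (-(l₁ : ℂ) * t₁ - (l₂ : ℂ) * t₂) /
      ((1 + Real.exp ((x + l₁ + l₂) / 2) : ℝ) : ℂ) =
      Complex.exp (-(l₁ : ℂ) * t₁ - (l₂ : ℂ) * t₂) * fermi (x + ((1 : ℝ) * l₁ + l₂)) := by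
    intro l₁ l₂
    rw [fermi, mul_one_div, one_mul, add_assoc]
  have kB : ∀ l₁ l₂ : ℝ, Complex.exp (-(l₁ : ℂ) * t₁ - (l₂ : ℂ) * t₂) /
      ((1 + Real.exp ((x - l₁ + l₂) / 2) : ℝ) : ℂ) =
      Complex.exp (-(l₁ : ℂ) * t₁ - (l₂ : ℂ) * t₂) * fermi (x + ((-1 : ℝ) * l₁ + l₂)) := by
    intro l₁ l₂
    rw [fermi, mul_one_div, show x + ((-1 : ℝ) * l₁ + l₂) = x - l₁ + l₂ by ring]
  have kC : ∀ l₁ l₂ : ℝ, Complex.exp (-(l₁ : ℂ) * t₁ - (l₂ : ℂ) * t₂) /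
      ((1 + Real.exp ((x + l₁ - l₂) / 2) : ℝ) : ℂ) =
      Complex.exp (-(l₁ : ℂ) * t₁ - (l₂ : ℂ) * t₂) * fermi (x - ((-1 : ℝ) * l₁ + l₂)) := by
    intro l₁ l₂
    rw [fermi, mul_one_div, show x - ((-1 : ℝ) * l₁ + l₂) = x + l₁ - l₂ by ring]
  have kD : ∀ l₁ l₂ : ℝ, Complex.exp (-(l₁ : ℂ) * t₁ - (l₂ : ℂ) * t₂) /
      ((1 + Real.exp ((x - l₁ - l₂) / 2) : ℝ) : ℂ) =
      Complex.exp (-(l₁ : ℂ) * t₁ - (l₂ : ℂ) * t₂) * fermi (x - ((1 : ℝ) * l₁ + l₂)) := by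
    intro l₁ l₂
    rw [fermi, mul_one_div, show x - ((1 : ℝ) * l₁ + l₂) = x - l₁ - l₂ by ring]
  simp only [kA, kB, kC, kD]
  have dA := double_lap cA bA h1 h2 1
  have dB := double_lap cA bA h1 h2 (-1)
  have dC := double_lap cB bB h1 h2 (-1)
  have dD := double_lap cB bB h1 h2 1
  simp only [one_mul, neg_mul, Complex.ofReal_neg, Complex.ofReal_one, sub_neg_eq_add,
    ← sub_eq_add_neg] at dA dB dC dD
  refine ⟨⟨double_integrable cA bA h1 h2 1, ?_⟩, ⟨double_integrable cA bA h1 h2 (-1), ?_⟩,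
    ⟨double_integrable cB bB h1 h2 (-1), ?_⟩, ⟨double_integrable cB bB h1 h2 1, ?_⟩⟩
  · obtain ⟨S, hS, hI⟩ := exists_expansion (R := 0)
      (I := ∫ l₁ in Set.Ioi (0 : ℝ), ∫ l₂ in Set.Ioi (0 : ℝ),
        Complex.exp (-(l₁ : ℂ) * t₁ - (l₂ : ℂ) * t₂) * fermi (x + (1 * l₁ + l₂)))
      (-1 / (t₁ - t₂)) (1 / (t₁ - t₂)) G1 G2
      (fun k => partial_fraction_sub (pn h1 k) (pn h2 k) hsub (by ring)) (by
        simp only [one_mul, neg_mul]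
        refine mul_left_cancel₀ hsub (dA.trans ?_)
        field_simp
        ring)
    exact ⟨S, hS, hI.trans (zero_sub S)⟩
  · refine exists_expansion (1 / (t₁ + t₂)) (1 / (t₁ + t₂)) F1 G2 (fun k => ?_) ?_
    · exact partial_fraction_add (mn hz1 k) (pn h2 k) hadd (by ring)
    · simp only [neg_mul, one_mul]
      field_simp
      linear_combination dB
  · refine exists_expansion (1 / (t₁ + t₂)) (1 / (t₁ + t₂)) G1 F2 (fun k => ?_) ?_
    · exact partial_fraction_add (pn h1 k) (mn hz2 k) hadd (by ring)
    · simp only [neg_mul, one_mul]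
      field_simp
      linear_combination dC
  · refine exists_expansion (-1 / (t₁ - t₂)) (1 / (t₁ - t₂)) F1 F2 (fun k => ?_) ?_
    · exact partial_fraction_sub (mn hz1 k) (mn hz2 k) hsub (by ring)
    · simp only [one_mul]
      field_simp
      linear_combination dD
end
end

section
/- For every complex t with 2t ∉ ℤ: lim_{N→∞} Σ_{k=−N}^{N} (−1)^k/(t−k/2) = 2π/sin(2πt). -/
/-!
Write `w = 2t`. Pairing the indices `k` and `-k`, the symmetric partial sum is
`1/t + 2 ∑_{n < N} (-1)^(n+1) c(w, n)`, where `c(x, n) = 1/(x-(n+1)) + 1/(x+(n+1))` is the general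
term `cotTerm` of Euler's expansion of `π cot (πx) - 1/x`. An alternating sum is twice the sum over
even indices minus the full sum, and `2 c(2t, 2m+1) = c(t, m)`, so the partial sum is the
difference of a partial cotangent series at `t` and one at `2t` (`cosecant_partial_sum`). Letting
`N → ∞`, the limit is `2π (cot πt - cot 2πt)`, and `cot z - cot 2z = 1 / sin 2z`.
-/

open scoped Real Topology
open MeasureTheory Filter

noncomputable section

/-- Twice the even-index part minus the full sum: the even `k` with `0 < |k| ≤ N` give the
cotangent terms at `t` with `m < N / 2` (floor division), all `0 < |k| ≤ N` give those at `2t`, and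
`k = 0` gives `1 / t`. -/
theorem cosecant_partial_sum (t : ℂ) (N : ℕ) :
    ∑ k ∈ Finset.Icc (-(N : ℤ)) (N : ℤ), (-1 : ℂ) ^ k / (t - (k : ℂ) / 2) =
      1 / t + 2 * (∑ m ∈ Finset.range (N / 2), cotTerm t m
        - ∑ n ∈ Finset.range N, cotTerm (2 * t) n) := by
  induction N with
  | zero => simp
  | succ N ih =>
    have hIcc : Finset.Icc (-((N + 1 : ℕ) : ℤ)) ((N + 1 : ℕ) : ℤ) =
        insert (-((N + 1 : ℕ) : ℤ)) (insert ((N + 1 : ℕ) : ℤ) (Finset.Icc (-(N : ℤ)) N)) := by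
      ext x
      simp only [Finset.mem_insert, Finset.mem_Icc]
      lia
    have hhalf : ∀ a b : ℂ, 1 / (2 * a - b) = 1 / (a - b / 2) / 2 := by
      intro a b
      rw [div_div, sub_mul, div_mul_cancel₀ _ two_ne_zero, mul_comm a]
    have hhalf' : ∀ a b : ℂ, 1 / (2 * a + b) = 1 / (a + b / 2) / 2 := by
      intro a b
      rw [div_div, add_mul, div_mul_cancel₀ _ two_ne_zero, mul_comm a]
    have hneg : (-1 : ℂ) ^ (-((N + 1 : ℕ) : ℤ)) = (-1) ^ (N + 1) := by
      rw [zpow_neg, zpow_natCast, ← inv_pow, inv_neg, inv_one]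
    rw [hIcc, Finset.sum_insert (by simp only [Finset.mem_insert, Finset.mem_Icc]; lia),
      Finset.sum_insert (by simp only [Finset.mem_Icc]; lia), ih, hneg, zpow_natCast,
      Finset.sum_range_succ _ N]
    simp only [cotTerm, hhalf, hhalf']
    push_cast
    rw [neg_div, sub_neg_eq_add]
    rcases Nat.even_or_odd' N with ⟨M, rfl | rfl⟩
    · have h1 : (2 * M + 1) / 2 = M := by lia
      have h2 : 2 * M / 2 = M := by lia
      rw [h1, h2, Odd.neg_one_pow ⟨M, rfl⟩]
      ring
    · have h1 : (2 * M + 1 + 1) / 2 = M + 1 := by lia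
      have h2 : (2 * M + 1) / 2 = M := by lia
      rw [h1, h2, Even.neg_one_pow ⟨M + 1, by ring⟩, Finset.sum_range_succ _ M]
      have h3 : (((2 * M + 1 : ℕ) : ℂ) + 1) / 2 = M + 1 := by push_cast; ring
      rw [h3]
      ring

/-- For `2t ∉ ℤ`, the symmetric partial sums
`Σ_{k=-N}^{N} (-1)^k/(t - k/2)` converge to `2π/sin(2πt)`. -/
theorem cosecant_partial_fraction (t : ℂ) (ht : ∀ k : ℤ, 2 * t ≠ (k : ℂ)) :
    Tendsto (fun N : ℕ => ∑ k ∈ Finset.Icc (-(N : ℤ)) (N : ℤ),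
        (-1 : ℂ) ^ k / (t - (k : ℂ) / 2)) atTop
      (𝓝 (2 * (π : ℂ) / Complex.sin (2 * (π : ℂ) * t))) := by
  have hw : 2 * t ∈ Complex.integerComplement := by
    rintro ⟨k, hk⟩
    exact ht k hk.symm
  have ht1 : t ∈ Complex.integerComplement := by
    rintro ⟨k, hk⟩
    exact ht (2 * k) (by push_cast; rw [← hk])
  have ht0 : t ≠ 0 := by
    rintro rfl
    exact ht 0 (by simp)
  have hsin2 : Complex.sin (2 * (π * t)) ≠ 0 := by
    have := sin_pi_mul_ne_zero hw
    rwa [mul_left_comm] at this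
  have hlim := ((((tendsto_logDeriv_euler_cot_sub ht1).comp
    (Nat.tendsto_div_const_atTop two_ne_zero)).sub
    (tendsto_logDeriv_euler_cot_sub hw)).const_mul 2).const_add (1 / t)
  simp_rw [cosecant_partial_sum]
  convert hlim using 2
  · rfl
  rw [mul_left_comm (π : ℂ) 2 t, mul_assoc 2 (π : ℂ) t, Complex.cot_eq_cos_div_sin,
    Complex.cot_eq_cos_div_sin]
  have h2 := Complex.sin_two_mul (π * t)
  have hs : Complex.sin (π * t) ≠ 0 := sin_pi_mul_ne_zero ht1
  have hc : Complex.cos (π * t) ≠ 0 := by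
    intro h
    exact hsin2 (by rw [h2, h, mul_zero])
  rw [h2, Complex.cos_two_mul]
  field_simp
  ring

end
end
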